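/- arXiv:2210.02220 — 2 statements merged into one kernel-verified Lean document; each statement's English description precedes it below -/
import Mathlib

section
/- Let S : ℝⁿ → ℝ be integrable and compactly supported with ∫ S = 1, let ζ₀, …, ζ_d be pairwise distinct positive reals, and let a₀, …, a_d ∈ ℝ satisfy Σ_{m=0}^{d} a_m = 1 and Σ_{m=0}^{d} a_m ζ_m^{−j} = 0 for j = 1, …, d. Define S^deep(y) = Σ_{m=0}^{d} a_m ζ_mⁿ S(ζ_m y). Then ∫_{ℝⁿ} S^deep(y) dy = 1, and for every polynomial p in n variables that is homogeneous of degree j with 1 ≤ j ≤ d one has ∫_{ℝⁿ} S^deep(y) p(y) dy = 0; that is, S^deep is a normalized kernel orthogonal to all homogeneous polynomials of degrees 1 through d. -/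
open MeasureTheory

/-!
Substituting `z = ζ y`, the `j`-homogeneous moments of the rescaled kernel `S_ζ` are `ζ⁻ʲ` times
those of `S`. Hence the degree `j` moments of `∑ aₘ S_{ζₘ}` are those of `S` multiplied by
`∑ aₘ ζₘ⁻ʲ`, which is `1` for `j = 0` and vanishes for `1 ≤ j ≤ d`.
-/

theorem integrable_smul_of_hasCompactSupport {X F : Type*} [TopologicalSpace X] [T2Space X]
    [MeasurableSpace X] [OpensMeasurableSpace X] [NormedAddCommGroup F] [NormedSpace ℝ F]
    [SecondCountableTopologyEither X F] {μ : Measure X} {S : X → ℝ} {q : X → F}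
    (hS : LocallyIntegrable S μ) (hsupp : HasCompactSupport S) (hq : Continuous q) :
    Integrable (fun y => S y • q y) μ := by
  have hon : IntegrableOn (fun y => S y • q y) (tsupport S) μ :=
    (hS.integrableOn_isCompact hsupp).smul_continuousOn hq.continuousOn hsupp
  exact (integrableOn_iff_integrable_of_support_subset
    ((Function.support_smul_subset_left S q).trans (subset_tsupport S))).mp hon

theorem eval_smul_of_isHomogeneous {σ R : Type*} [CommSemiring R] {p : MvPolynomial σ R} {j : ℕ}
    (hp : p.IsHomogeneous j) (c : R) (y : σ → R) :
    MvPolynomial.eval (c • y) p = c ^ j * MvPolynomial.eval y p := by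
  simp only [MvPolynomial.eval_eq, Finset.mul_sum]
  refine Finset.sum_congr rfl fun k hk => ?_
  have hdeg : ∑ i ∈ k.support, k i = j := by
    rw [← Finsupp.degree_apply, Finsupp.degree_eq_weight_one]
    exact hp (MvPolynomial.mem_support_iff.mp hk)
  simp only [Pi.smul_apply, smul_eq_mul, mul_pow, Finset.prod_mul_distrib,
    Finset.prod_pow_eq_pow_sum, hdeg]
  ring

section Kernels

variable {E F ι : Type*}

section Rescaling

variable [AddCommGroup E] [Module ℝ E] [AddCommGroup F] [Module ℝ F]

/-- `q` is positively homogeneous of degree `j`: `q (c y) = cʲ q y` for `c > 0`. This is the only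
property of homogeneous polynomials that enters the computation of moments; the degree is an
integer so that negative degrees are covered as well. -/
def IsPosHomogeneous (j : ℤ) (q : E → F) : Prop :=
  ∀ ⦃c : ℝ⦄, 0 < c → ∀ y, q (c • y) = c ^ j • q y

/-- The rescaled kernel `S_c(y) = cⁿ S(c y)`, where `n = dim E`. -/
noncomputable def rescaledKernel (c : ℝ) (S : E → ℝ) (y : E) : ℝ :=
  c ^ Module.finrank ℝ E * S (c • y)

/-- The deep kernel `S^deep = ∑ aₘ S_{ζₘ}` with weights `a` and scales `ζ`. -/
noncomputable def deepKernel [Fintype ι] (a ζ : ι → ℝ) (S : E → ℝ) (y : E) : ℝ :=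
  ∑ m, a m * rescaledKernel (ζ m) S y

theorem isPosHomogeneous_const (v : F) : IsPosHomogeneous 0 fun _ : E => v :=
  fun c _ _ => by rw [zpow_zero, one_smul]

theorem isPosHomogeneous_eval {σ : Type*} {p : MvPolynomial σ ℝ} {j : ℕ}
    (hp : p.IsHomogeneous j) : IsPosHomogeneous j fun y => MvPolynomial.eval y p :=
  fun c _ y => by simp only [eval_smul_of_isHomogeneous hp, zpow_natCast, smul_eq_mul]

theorem rescaledKernel_smul_eq {c : ℝ} (hc : 0 < c) (S : E → ℝ) {j : ℤ} {q : E → F}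
    (hq : IsPosHomogeneous j q) (y : E) :
    rescaledKernel c S y • q y =
      (c ^ Module.finrank ℝ E * c ^ (-j)) • (S (c • y) • q (c • y)) := by
  have hcj : c ^ (-j) * c ^ j = 1 := by rw [← zpow_add₀ hc.ne', neg_add_cancel, zpow_zero]
  rw [rescaledKernel, hq hc, smul_smul, smul_smul]
  congr 1
  linear_combination -(c ^ Module.finrank ℝ E * S (c • y)) * hcj

end Rescaling

variable [NormedAddCommGroup E] [NormedSpace ℝ E] [MeasurableSpace E] [BorelSpace E]
  [FiniteDimensional ℝ E] {μ : Measure E} [μ.IsAddHaarMeasure]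
  [NormedAddCommGroup F] [NormedSpace ℝ F] {S : E → ℝ} {j : ℤ} {q : E → F} {c : ℝ}

theorem integrable_rescaledKernel_smul (hc : 0 < c) (hq : IsPosHomogeneous j q)
    (hSq : Integrable (fun y => S y • q y) μ) :
    Integrable (fun y => rescaledKernel c S y • q y) μ := by
  simp only [rescaledKernel_smul_eq hc S hq]
  exact (hSq.comp_smul hc.ne').smul _

theorem integral_rescaledKernel_smul (hc : 0 < c) (hq : IsPosHomogeneous j q) :
    ∫ y, rescaledKernel c S y • q y ∂μ = c ^ (-j) • ∫ y, S y • q y ∂μ := by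
  have hcn : c ^ Module.finrank ℝ E ≠ 0 := (pow_pos hc _).ne'
  simp only [rescaledKernel_smul_eq hc S hq]
  rw [integral_smul, Measure.integral_comp_smul_of_nonneg μ (fun y => S y • q y) c (hR := hc.le),
    smul_smul, mul_right_comm, mul_inv_cancel₀ hcn, one_mul]

variable [Fintype ι] {a ζ : ι → ℝ}

theorem integral_deepKernel_smul (a : ι → ℝ) (hζ : ∀ m, 0 < ζ m) (hq : IsPosHomogeneous j q)
    (hSq : Integrable (fun y => S y • q y) μ) :
    ∫ y, deepKernel a ζ S y • q y ∂μ = (∑ m, a m * ζ m ^ (-j)) • ∫ y, S y • q y ∂μ := by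
  have h_integrable (m : ι) : Integrable (fun y => a m • rescaledKernel (ζ m) S y • q y) μ :=
    (integrable_rescaledKernel_smul (hζ m) hq hSq).smul (a m)
  simp only [deepKernel, Finset.sum_smul, mul_smul]
  rw [integral_finsetSum _ fun m _ => h_integrable m]
  simp only [integral_smul, integral_rescaledKernel_smul (hζ _) hq]

theorem statement9_general {d : ℕ} (hS1 : ∫ y, S y ∂μ = 1) (hζ : ∀ m, 0 < ζ m)
    (ha1 : ∑ m, a m = 1)
    (haj : ∀ j : ℕ, 1 ≤ j → j ≤ d → ∑ m, a m * ζ m ^ (-(j : ℤ)) = 0) :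
    (∫ y, deepKernel a ζ S y ∂μ = 1) ∧
    ∀ (j : ℕ) (q : E → F), IsPosHomogeneous j q → Integrable (fun y => S y • q y) μ →
      1 ≤ j → j ≤ d → ∫ y, deepKernel a ζ S y • q y ∂μ = 0 := by
  refine ⟨?_, fun j q hq hSq hj hjd => ?_⟩
  · have hS : Integrable S μ := .of_integral_ne_zero (hS1.trans_ne one_ne_zero)
    have hmoment := integral_deepKernel_smul a hζ (isPosHomogeneous_const (1 : ℝ)) (hS.smul_const 1)
    simpa only [smul_eq_mul, mul_one, neg_zero, zpow_zero, ha1, hS1] using hmoment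
  · rw [integral_deepKernel_smul a hζ hq hSq, haj j hj hjd, zero_smul]

end Kernels

/-- Let `S : ℝⁿ → ℝ` be integrable, compactly supported, with `∫ S = 1`;
let `ζ₀, …, ζ_d` be pairwise distinct positive reals and `a₀, …, a_d` reals with
`Σ aₘ = 1` and `Σ aₘ ζₘ⁻ʲ = 0` for `j = 1, …, d`.  Define
`S^deep(y) = Σₘ aₘ ζₘⁿ S(ζₘ y)`.  Then `∫ S^deep = 1`, and for every polynomial `p` in `n`
variables homogeneous of degree `j` with `1 ≤ j ≤ d`, `∫ S^deep(y) p(y) dy = 0`; i.e.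
`S^deep` is a normalized kernel orthogonal to all homogeneous polynomials of degrees
`1` through `d` (a kernel of Nash depth `d`). -/
theorem statement9 (n d : ℕ) (S : (Fin n → ℝ) → ℝ)
    (hInt : Integrable S) (hsupp : HasCompactSupport S)
    (hS1 : ∫ y, S y = 1)
    (ζ : Fin (d + 1) → ℝ) (hζpos : ∀ m, 0 < ζ m) (hinj : Function.Injective ζ)
    (a : Fin (d + 1) → ℝ) (ha1 : ∑ m, a m = 1)
    (haj : ∀ j : ℕ, 1 ≤ j → j ≤ d → ∑ m, a m * (ζ m) ^ (-(j : ℤ)) = 0)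
    (Sdeep : (Fin n → ℝ) → ℝ)
    (hSdeep : ∀ y, Sdeep y = ∑ m, a m * (ζ m) ^ n * S (ζ m • y)) :
    (∫ y, Sdeep y = 1) ∧
    ∀ (j : ℕ) (p : MvPolynomial (Fin n) ℝ), p.IsHomogeneous j → 1 ≤ j → j ≤ d →
      ∫ y, Sdeep y * MvPolynomial.eval y p = 0 := by
  obtain rfl : Sdeep = deepKernel a ζ S := funext fun y => by
    simp only [hSdeep, deepKernel, rescaledKernel, Module.finrank_fin_fun, mul_assoc]
  exact (statement9_general hS1 hζpos ha1 haj).imp_right fun hmoment j p hp => hmoment j _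
    (isPosHomogeneous_eval hp)
    (integrable_smul_of_hasCompactSupport hInt.locallyIntegrable hsupp p.continuous_eval)
end

section
/- Let a, x, y, z be real numbers with z ≠ 0. Then there exists a unique r > 0 satisfying x² + y² + z² = r² + a²(1 − z²/r²); that is, the defining implicit equation of the Kerr radial function r(x, y, z) has exactly one positive solution away from the equatorial plane z = 0. -/
/-!
In terms of `s = r²` the equation reads `s² = b s + c` with `b = x² + y² + z² - a²` and
`c = a² z² ≥ 0`. The product of the two roots of this quadratic is `-c ≤ 0`, so at most one of
them is positive, and the larger one, `(b + √(b² + 4c)) / 2`, is positive unless `c = 0` and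
`b ≤ 0`. In the Kerr case the exception is the disk `z = 0`, `x² + y² ≤ a²` bounded by the ring
singularity.
-/

theorem eq_of_sq_eq_mul_add {R : Type*} [CommRing R] [LinearOrder R] [IsStrictOrderedRing R]
    {b c s t : R} (hc : 0 ≤ c) (hs : 0 < s) (ht : 0 < t)
    (hs_root : s ^ 2 = b * s + c) (ht_root : t ^ 2 = b * t + c) : s = t := by
  have hprod : (s - t) * (s * t + c) = 0 := by
    linear_combination t * hs_root - s * ht_root
  have hpos : 0 < s * t + c := by positivity
  exact sub_eq_zero.1 ((mul_eq_zero.1 hprod).resolve_right hpos.ne')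

theorem exists_pos_sq_eq_mul_add_iff {b c : ℝ} (hc : 0 ≤ c) :
    (∃ s : ℝ, 0 < s ∧ s ^ 2 = b * s + c) ↔ 0 < c ∨ 0 < b := by
  constructor
  · rintro ⟨s, hs, hroot⟩
    by_contra! ⟨hc_nonpos, hb_nonpos⟩
    have : b * s ≤ 0 := mul_nonpos_of_nonpos_of_nonneg hb_nonpos hs.le
    have : 0 < s ^ 2 := by positivity
    linarith
  · intro hbc
    have hsq : √(b ^ 2 + 4 * c) ^ 2 = b ^ 2 + 4 * c := Real.sq_sqrt (by positivity)
    refine ⟨(b + √(b ^ 2 + 4 * c)) / 2, ?_, by linear_combination hsq / 4⟩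
    rcases hbc with hc_pos | hb_pos
    · have hlt : -b < √(b ^ 2 + 4 * c) := Real.lt_sqrt_of_sq_lt (by linarith [neg_sq b])
      linarith
    · positivity

theorem existsUnique_pos_sq_eq_mul_add_iff {b c : ℝ} (hc : 0 ≤ c) :
    (∃! s : ℝ, 0 < s ∧ s ^ 2 = b * s + c) ↔ 0 < c ∨ 0 < b := by
  rw [← exists_pos_sq_eq_mul_add_iff hc]
  exact ⟨ExistsUnique.exists, fun hex ↦ existsUnique_of_exists_of_unique hex
    fun _ _ hs ht ↦ eq_of_sq_eq_mul_add hc hs.1 ht.1 hs.2 ht.2⟩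

theorem existsUnique_pos_and_sq_iff {p : ℝ → Prop} :
    (∃! r : ℝ, 0 < r ∧ p (r ^ 2)) ↔ ∃! s : ℝ, 0 < s ∧ p s := by
  constructor
  · rintro ⟨r, ⟨hr, hpr⟩, huniq⟩
    refine ⟨r ^ 2, ⟨by positivity, hpr⟩, fun s ⟨hs, hps⟩ ↦ ?_⟩
    rw [← huniq √s ⟨Real.sqrt_pos.2 hs, by rwa [Real.sq_sqrt hs.le]⟩, Real.sq_sqrt hs.le]
  · rintro ⟨s, ⟨hs, hps⟩, huniq⟩
    refine ⟨√s, ⟨Real.sqrt_pos.2 hs, by rwa [Real.sq_sqrt hs.le]⟩, fun r ⟨hr, hpr⟩ ↦ ?_⟩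
    rw [← huniq (r ^ 2) ⟨by positivity, hpr⟩, Real.sqrt_sq hr.le]

theorem kerr_radial_equation_iff {K : Type*} [Field K] {a x y z r : K} (hr : r ≠ 0) :
    x ^ 2 + y ^ 2 + z ^ 2 = r ^ 2 + a ^ 2 * (1 - z ^ 2 / r ^ 2) ↔
      (r ^ 2) ^ 2 = (x ^ 2 + y ^ 2 + z ^ 2 - a ^ 2) * r ^ 2 + a ^ 2 * z ^ 2 := by
  field_simp
  constructor <;> intro h <;> linear_combination -h

theorem kerr_quadratic_coeff_pos_iff {a x y z : ℝ} :
    (0 < a ^ 2 * z ^ 2 ∨ 0 < x ^ 2 + y ^ 2 + z ^ 2 - a ^ 2) ↔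
      z ≠ 0 ∨ a ^ 2 < x ^ 2 + y ^ 2 := by
  rcases eq_or_ne z 0 with rfl | hz
  · simp
  · refine iff_of_true ?_ (Or.inl hz)
    rcases eq_or_ne a 0 with rfl | ha
    · right
      have : 0 < x ^ 2 + y ^ 2 + z ^ 2 := by positivity
      linarith
    · left
      positivity

theorem statement14_general (a x y z : ℝ) :
    (∃! r : ℝ, 0 < r ∧
      x ^ 2 + y ^ 2 + z ^ 2 = r ^ 2 + a ^ 2 * (1 - z ^ 2 / r ^ 2)) ↔
      z ≠ 0 ∨ a ^ 2 < x ^ 2 + y ^ 2 := by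
  set b := x ^ 2 + y ^ 2 + z ^ 2 - a ^ 2
  set c := a ^ 2 * z ^ 2
  calc
    _ ↔ ∃! r : ℝ, 0 < r ∧ (r ^ 2) ^ 2 = b * r ^ 2 + c :=
      existsUnique_congr fun _ ↦ and_congr_right fun hr ↦ kerr_radial_equation_iff hr.ne'
    _ ↔ ∃! s : ℝ, 0 < s ∧ s ^ 2 = b * s + c :=
      existsUnique_pos_and_sq_iff (p := fun s ↦ s ^ 2 = b * s + c)
    _ ↔ 0 < c ∨ 0 < b := existsUnique_pos_sq_eq_mul_add_iff (by positivity)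
    _ ↔ z ≠ 0 ∨ a ^ 2 < x ^ 2 + y ^ 2 := kerr_quadratic_coeff_pos_iff

/-- Let `a, x, y, z` be real with `z ≠ 0`.  Then there exists a unique
`r > 0` satisfying `x² + y² + z² = r² + a²(1 − z²/r²)`: the defining implicit equation of
the Kerr radial function `r(x, y, z)` has exactly one positive solution away from the
equatorial plane `z = 0`. -/
theorem statement14 (a x y z : ℝ) (hz : z ≠ 0) :
    ∃! r : ℝ, 0 < r ∧
      x ^ 2 + y ^ 2 + z ^ 2 = r ^ 2 + a ^ 2 * (1 - z ^ 2 / r ^ 2) :=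
  (statement14_general a x y z).2 (Or.inl hz)
end
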